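/- Let d be a squarefree positive integer and K = ℚ(√−d) the imaginary quadratic field inside ℂ, with trace form q(x,y) = Tr_{K/ℚ}(x·ȳ), viewed as a quadratic space over ℚ of dimension 2. Let V be the 22-dimensional quadratic space over ℚ given by ℚ²² with the bilinear form whose Gram matrix is block diagonal with two blocks equal to the negative of the Cartan matrix of E8, two blocks [[0,1],[1,0]], and one block [[−2,1],[1,−2]]. Then there exists a quadratic space V₁ over ℚ (of dimension 20) such that the orthogonal direct sum (K, q) ⊕ V₁ is isometric to V as quadratic spaces over ℚ. -/

import Mathlib

open Matrix

/-- The Gram matrix (over `ℚ`) of the 22-dimensional quadratic space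
`E8(-1) ⊕ E8(-1) ⊕ U ⊕ U ⊕ A2(-1)`: block diagonal with two blocks equal to the
negative of the Cartan matrix of `E₈` (indices `0..7` and `8..15`), two hyperbolic
blocks `[[0,1],[1,0]]` (indices `16,17` and `18,19`), and one block `[[-2,1],[1,-2]]`
(indices `20,21`). -/
def gramVQ : Matrix (Fin 22) (Fin 22) ℚ := fun i j =>
  if h : (i : ℕ) < 8 ∧ (j : ℕ) < 8 then
    - (CartanMatrix.E₈ ⟨(i : ℕ), h.1⟩ ⟨(j : ℕ), h.2⟩ : ℚ)
  else if h : 8 ≤ (i : ℕ) ∧ (i : ℕ) < 16 ∧ 8 ≤ (j : ℕ) ∧ (j : ℕ) < 16 then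
    - (CartanMatrix.E₈ ⟨(i : ℕ) - 8, by omega⟩ ⟨(j : ℕ) - 8, by omega⟩ : ℚ)
  else if ((i : ℕ) = 16 ∧ (j : ℕ) = 17) ∨ ((i : ℕ) = 17 ∧ (j : ℕ) = 16) ∨
          ((i : ℕ) = 18 ∧ (j : ℕ) = 19) ∨ ((i : ℕ) = 19 ∧ (j : ℕ) = 18) then 1
  else if ((i : ℕ) = 20 ∧ (j : ℕ) = 20) ∨ ((i : ℕ) = 21 ∧ (j : ℕ) = 21) then -2
  else if ((i : ℕ) = 20 ∧ (j : ℕ) = 21) ∨ ((i : ℕ) = 21 ∧ (j : ℕ) = 20) then 1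
  else 0

open Module

/-- A nondegenerate bilinear space which embeds isometrically into a symmetric bilinear space
splits off as an orthogonal direct summand. -/
theorem LinearMap.BilinForm.exists_isometry_prod_of_nondegenerate
    {k V W : Type*} [Field k] [AddCommGroup V] [Module k V] [FiniteDimensional k V]
    [AddCommGroup W] [Module k W] [FiniteDimensional k W]
    {B : LinearMap.BilinForm k V} (hB : B.IsSymm)
    {q : LinearMap.BilinForm k W} (hq : q.Nondegenerate)
    (f : W →ₗ[k] V) (hf : ∀ x y, B (f x) (f y) = q x y)
    {n : ℕ} (hn : finrank k W + n = finrank k V) :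
    ∃ B₁ : LinearMap.BilinForm k (Fin n → k), (∀ v w, B₁ v w = B₁ w v) ∧
      ∃ e : (W × (Fin n → k)) ≃ₗ[k] V, ∀ x₁ x₂ v₁ v₂,
        B (e (x₁, v₁)) (e (x₂, v₂)) = q x₁ x₂ + B₁ v₁ v₂ := by
  have hinj : Function.Injective f := by
    rw [← LinearMap.ker_eq_bot, LinearMap.ker_eq_bot']
    intro x hx
    exact hq.1 x fun y => by rw [← hf, hx, map_zero, LinearMap.zero_apply]
  have hdisj : Disjoint (LinearMap.range f) (B.orthogonal (LinearMap.range f)) := by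
    rw [Submodule.disjoint_def]
    rintro _ ⟨x, rfl⟩ hx
    have : x = 0 := hq.2 x fun y => by rw [← hf]; exact hx (f y) ⟨y, rfl⟩
    rw [this, map_zero]
  have hcompl := (isCompl_orthogonal_iff_disjoint hB.isRefl).2 hdisj
  have hrank : finrank k (Fin n → k) = finrank k (B.orthogonal (LinearMap.range f)) := by
    have h₁ := Submodule.finrank_add_eq_of_isCompl hcompl
    have h₂ := LinearMap.finrank_range_of_inj hinj
    rw [finrank_fin_fun]
    omega
  let g := LinearEquiv.ofFinrankEq (Fin n → k) (B.orthogonal (LinearMap.range f)) hrank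
  let e := ((LinearEquiv.ofInjective f hinj).prodCongr g).trans
    (Submodule.prodEquivOfIsCompl _ _ hcompl)
  have he (x v) : e (x, v) = f x + g v := by simp [e]
  have horth (x v) : B (f x) (g v) = 0 := (g v).2 (f x) ⟨x, rfl⟩
  refine ⟨(B.restrict _).comp g.toLinearMap g.toLinearMap, fun v w => hB.eq _ _, e,
    fun x₁ x₂ v₁ v₂ => ?_⟩
  have horth' : B (g v₁) (f x₂) = 0 := by rw [← horth x₂ v₁]; exact hB.eq _ _
  rw [he, he]
  simp [horth, horth', hf]

theorem gramVQ_isSymm : gramVQ.IsSymm := by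
  have h : ∀ p : Fin 22 × Fin 22, gramVQ p.1 p.2 = gramVQ p.2 p.1 := by decide +kernel
  exact IsSymm.ext fun i j => h (j, i)

section QuadraticField

variable {d : ℕ} {K : Type*} [Field K] [NumberField K] {ω : K} {σ : K ≃ₐ[ℚ] K}

theorem trace_eq_zero_of_map_eq_neg (hσ : σ ω = -ω) : Algebra.trace ℚ K ω = 0 := by
  have h := Algebra.trace_eq_of_algEquiv σ ω
  rw [hσ, map_neg] at h
  linarith

theorem linearIndependent_one_of_map_eq_neg (h0 : ω ≠ 0) (hσ : σ ω = -ω) :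
    LinearIndependent ℚ ![1, ω] := by
  rw [LinearIndependent.pair_iff]
  intro s t h
  have h' := congrArg σ h
  rw [map_add, map_rat_smul, map_rat_smul, map_one, map_zero, hσ] at h'
  have hs : (2 * s) • (1 : K) = 0 := by
    linear_combination (norm := module) h + h'
  have hs0 : s = 0 := by simpa using hs
  subst hs0
  simpa [h0] using h

/-- The quadratic space `K` with its trace form embeds into the sum of two hyperbolic planes
in `V`. -/
theorem exists_isometry_gramVQ (hd0 : 0 < d) (hdeg : finrank ℚ K = 2)
    (hω : ω ^ 2 = -(d : K)) (hσ : σ ω = -ω) :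
    ∃ f : K →ₗ[ℚ] (Fin 22 → ℚ), ∀ x y,
      gramVQ.toBilin' (f x) (f y) = Algebra.traceForm ℚ K x (σ y) := by
  have h0 : ω ≠ 0 := by
    rintro rfl
    simp [hd0.ne'] at hω
  let b : Basis (Fin 2) ℚ K := basisOfLinearIndependentOfCardEqFinrank
    (linearIndependent_one_of_map_eq_neg h0 hσ) (by simp [hdeg])
  have hb0 : b 0 = 1 := by simp [b]
  have hb1 : b 1 = ω := by simp [b]
  let f : K →ₗ[ℚ] (Fin 22 → ℚ) := b.constr ℚ
    ![Pi.single 16 1 + Pi.single 17 1, Pi.single 18 1 + (d : ℚ) • Pi.single 19 1]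
  have hf (i) : f (b i) = _ := b.constr_basis ℚ _ i
  have htr := trace_eq_zero_of_map_eq_neg hσ
  have htr1 : Algebra.trace ℚ K 1 = 2 := by
    simpa [hdeg] using Algebra.trace_algebraMap (R := ℚ) (S := K) 1
  have htrd : Algebra.trace ℚ K (d : K) = 2 * d := by
    simpa [hdeg] using Algebra.trace_algebraMap (R := ℚ) (S := K) (d : ℚ)
  have hωω : ω * ω = -(d : K) := by rw [← hω, sq]
  have h : gramVQ.toBilin'.comp f f =
      (Algebra.traceForm ℚ K).compRight σ.toLinearMap := by
    refine LinearMap.BilinForm.ext_basis b fun i j => ?_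
    rw [LinearMap.BilinForm.comp_apply, hf, hf]
    fin_cases i <;> fin_cases j <;>
      simp [hb0, hb1, hσ, htr, htr1, htrd, hωω, gramVQ, Algebra.traceForm_apply] <;> ring
  exact ⟨f, fun x y => LinearMap.congr_fun₂ h x y⟩

theorem traceForm_compRight_nondegenerate (σ : K ≃ₐ[ℚ] K) :
    ((Algebra.traceForm ℚ K).compRight σ.toLinearMap).Nondegenerate := by
  have h := traceForm_nondegenerate ℚ K
  refine ⟨fun x hx => h.1 x fun y => ?_, fun y hy => ?_⟩
  · simpa using hx (σ.symm y)
  · simpa using h.2 (σ y) hy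

end QuadraticField

/-- **The trace form of an imaginary quadratic field splits off the quadratic space `V`.**
Let `d` be a squarefree positive integer, `K = ℚ(√-d)` (an abstract number field of
degree 2 over `ℚ` containing `ω` with `ω ^ 2 = -d`), `σ` the nontrivial Galois
automorphism (complex conjugation, `σ ω = -ω`), and `q(x, y) = Tr_{K/ℚ}(x * σ y)` the
trace form, viewed as a 2-dimensional quadratic space over `ℚ`.  Let `V` be `ℚ²²` with
the bilinear form of Gram matrix `gramVQ`.  Then there exists a quadratic space `V₁`
over `ℚ` of dimension 20 (realized as `ℚ²⁰` with a symmetric bilinear form `B₁`) such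
that the orthogonal direct sum `(K, q) ⊕ V₁` is isometric to `V` as quadratic spaces
over `ℚ`. -/
theorem traceForm_orthogonal_complement_in_V
    (d : ℕ) (hd : Squarefree d) (hd0 : 0 < d)
    (K : Type) [Field K] [NumberField K]
    (hdeg : Module.finrank ℚ K = 2)
    (ω : K) (hω : ω ^ 2 = -(d : K))
    (σ : K ≃ₐ[ℚ] K) (hσ : σ ω = -ω) :
    ∃ B₁ : (Fin 20 → ℚ) →ₗ[ℚ] (Fin 20 → ℚ) →ₗ[ℚ] ℚ,
      (∀ v w : Fin 20 → ℚ, B₁ v w = B₁ w v) ∧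
      ∃ e : (K × (Fin 20 → ℚ)) ≃ₗ[ℚ] (Fin 22 → ℚ),
        ∀ (x₁ x₂ : K) (v₁ v₂ : Fin 20 → ℚ),
          e (x₁, v₁) ⬝ᵥ gramVQ.mulVec (e (x₂, v₂)) =
            Algebra.trace ℚ K (x₁ * σ x₂) + B₁ v₁ v₂ := by
  obtain ⟨f, hf⟩ := exists_isometry_gramVQ hd0 hdeg hω hσ
  obtain ⟨B₁, hB₁, e, he⟩ := LinearMap.BilinForm.exists_isometry_prod_of_nondegenerate
    (isSymm_toBilin'_iff_isSymm.2 gramVQ_isSymm) (traceForm_compRight_nondegenerate σ) f hf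
    (n := 20) (by simp [hdeg])
  refine ⟨B₁, hB₁, e, fun x₁ x₂ v₁ v₂ => ?_⟩
  rw [← toBilin'_apply', he]
  rfl
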